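/- For real u ≥ 0 and integer m ≥ 1, the Fourier coefficients of θ^u satisfy |c_m(u)| ≤ 6u·m^{u/2+1}. -/

import Mathlib

/-- The "binomial coefficient" polynomial `C(w, j) = w(w-1)⋯(w-j+1)/j!` in `ℚ[w]`. -/
noncomputable def binomPoly (j : ℕ) : Polynomial ℚ :=
  Polynomial.C ((j.factorial : ℚ)⁻¹) * ∏ i ∈ Finset.range j, (Polynomial.X - Polynomial.C (i : ℚ))

/-- `repCount j m` is the number of `j`-tuples of positive integers whose squares sum to `m`. -/
def repCount (j m : ℕ) : ℕ :=
  (Finset.univ.filter (fun f : Fin j → Fin (m + 1) =>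
    (∀ i, 1 ≤ (f i).1) ∧ ∑ i, ((f i).1)^2 = m)).card

/-- `thetaCoeff m = c_m(w)`, the `m`-th Fourier coefficient of `θ^w`, defined via the
binomial expansion `ϑ(q)^w = 1 + ∑_{j≥1} C(w,j) 2^j (∑_{n≥1} q^{n²})^j`. -/
noncomputable def thetaCoeff (m : ℕ) : Polynomial ℚ :=
  ∑ j ∈ Finset.Icc 1 m, ((2:ℚ)^j * (repCount j m : ℚ)) • binomPoly j

/-!
Differentiating `ϑ^u` gives `q (ϑ^u)' = u (q ϑ' / ϑ) ϑ^u`, so Cauchy's formula on `|q| = e^{-t}`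
bounds `m |c_m(u)| e^{-mt}` by `u · max |q ϑ' / ϑ| · max |ϑ|^u`. The Jacobi triple product
`ϑ(q) = ∏ (1 - q^{2n}) (1 + q^{2n-1})²` expands `q ϑ' / ϑ` into a Lambert series whose terms are
dominated, through an inequality for `sinh`, by those of `∑ 1 / (t k)²`, whence
`|q ϑ' / ϑ| ≤ π² / (4 t²)`. For `t = 1.01 π / m`, Poisson summation shows that
`|ϑ(q)| ≤ ϑ(e^{-t}) ≤ √m`.
-/

open Filter Finset Topology Asymptotics
open scoped Real

section GaussianBinomial

/-- The finite `Q`-Pochhammer symbol `(Q; Q)_n = (1 - Q)(1 - Q²)⋯(1 - Qⁿ)`. -/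
def qPochhammer {R : Type*} [CommRing R] (Q : R) (n : ℕ) : R :=
  ∏ i ∈ range n, (1 - Q ^ (i + 1))

/-- The Gaussian binomial coefficient, encoded by its Pascal recursion so that it is defined
for every `Q`, including roots of unity, where the quotient of Pochhammer symbols is not. -/
def gaussBinom {R : Type*} [CommSemiring R] (Q : R) : ℕ → ℕ → R
  | _, 0 => 1
  | 0, _ + 1 => 0
  | n + 1, k + 1 => gaussBinom Q n k + Q ^ (k + 1) * gaussBinom Q n (k + 1)

section CommSemiring

variable {R : Type*} [CommSemiring R] (Q : R)

@[simp]
lemma gaussBinom_zero_right (n : ℕ) : gaussBinom Q n 0 = 1 := by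
  cases n <;> rfl

lemma gaussBinom_succ_succ (n k : ℕ) :
    gaussBinom Q (n + 1) (k + 1) = gaussBinom Q n k + Q ^ (k + 1) * gaussBinom Q n (k + 1) :=
  rfl

lemma gaussBinom_eq_zero_of_lt {n k : ℕ} (h : n < k) : gaussBinom Q n k = 0 := by
  induction n generalizing k with
  | zero => obtain ⟨k, rfl⟩ := Nat.exists_eq_succ_of_ne_zero h.ne'; rfl
  | succ n ih =>
    obtain ⟨k, rfl⟩ := Nat.exists_eq_succ_of_ne_zero (Nat.ne_zero_of_lt h)
    rw [gaussBinom_succ_succ, ih (by omega), ih (by omega), mul_zero, add_zero]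

@[simp]
lemma gaussBinom_self (n : ℕ) : gaussBinom Q n n = 1 := by
  induction n with
  | zero => rfl
  | succ n ih => rw [gaussBinom_succ_succ, ih, gaussBinom_eq_zero_of_lt Q n.lt_succ_self, mul_zero,
      add_zero]

lemma prod_one_add_mul_pow_eq_sum_gaussBinom (x : R) (n : ℕ) :
    ∏ i ∈ range n, (1 + x * Q ^ i) =
      ∑ k ∈ range (n + 1), gaussBinom Q n k * Q ^ k.choose 2 * x ^ k := by
  induction n generalizing x with
  | zero => simp
  | succ n ih =>
    have shift : ∏ i ∈ range n, (1 + x * Q ^ (i + 1)) =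
        ∑ k ∈ range (n + 1), gaussBinom Q n k * Q ^ k.choose 2 * (x * Q) ^ k := by
      rw [← ih]; simp only [pow_succ', mul_assoc]
    have pascal (k : ℕ) : gaussBinom Q (n + 1) (k + 1) * Q ^ (k + 1).choose 2 * x ^ (k + 1) =
        gaussBinom Q n (k + 1) * Q ^ (k + 1).choose 2 * (x * Q) ^ (k + 1) +
          x * (gaussBinom Q n k * Q ^ k.choose 2 * (x * Q) ^ k) := by
      rw [gaussBinom_succ_succ, Nat.choose_succ_succ' k 1, Nat.choose_one_right]
      ring
    have extend : ∑ k ∈ range (n + 1), gaussBinom Q n k * Q ^ k.choose 2 * (x * Q) ^ k =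
        ∑ k ∈ range (n + 1), gaussBinom Q n (k + 1) * Q ^ (k + 1).choose 2 * (x * Q) ^ (k + 1) +
          1 := by
      rw [sum_range_succ', sum_range_succ _ n, gaussBinom_eq_zero_of_lt Q n.lt_succ_self]
      simp
    rw [prod_range_succ', shift, sum_range_succ' _ (n + 1)]
    simp only [pascal, sum_add_distrib, ← mul_sum]
    rw [pow_zero, mul_one, mul_add, mul_one, extend]
    simp only [gaussBinom_zero_right, Nat.choose_zero_succ, pow_zero, mul_one]
    ring

end CommSemiring

section CommRing

variable {R : Type*} [CommRing R] (Q : R)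

lemma qPochhammer_succ (n : ℕ) : qPochhammer Q (n + 1) = qPochhammer Q n * (1 - Q ^ (n + 1)) :=
  prod_range_succ _ _

lemma gaussBinom_mul_qPochhammer_mul_qPochhammer (a b : ℕ) :
    gaussBinom Q (a + b) a * (qPochhammer Q a * qPochhammer Q b) = qPochhammer Q (a + b) := by
  induction a generalizing b with
  | zero => simp [qPochhammer]
  | succ a iha =>
    induction b with
    | zero => simp [qPochhammer]
    | succ b ihb =>
      have left : gaussBinom Q (a + b + 1) a * (qPochhammer Q a * qPochhammer Q (b + 1)) =
          qPochhammer Q (a + b + 1) := iha (b + 1)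
      have right : gaussBinom Q (a + b + 1) (a + 1) *
          (qPochhammer Q (a + 1) * qPochhammer Q b) = qPochhammer Q (a + b + 1) := by
        simpa only [add_right_comm a 1 b] using ihb
      rw [show a + 1 + (b + 1) = a + b + 1 + 1 by ring, gaussBinom_succ_succ,
        qPochhammer_succ Q (a + b + 1)]
      simp only [qPochhammer_succ Q a, qPochhammer_succ Q b] at left right ⊢
      linear_combination (1 - Q ^ (a + 1)) * left + Q ^ (a + 1) * (1 - Q ^ (b + 1)) * right

end CommRing

end GaussianBinomial

section FiniteTripleProduct

variable {K : Type*} [Field K] {q w : K}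

lemma prod_one_add_mul_zpow_sub (hq : q ≠ 0) (hw : w ≠ 0) (N : ℕ) :
    ∏ i ∈ range N, (1 + w * q ^ (2 * i + 1 - 2 * N : ℤ)) =
      w ^ N * (q ^ N ^ 2)⁻¹ * ∏ i ∈ range N, (1 + w⁻¹ * q ^ (2 * i + 1)) := by
  have sum_odd : ∑ i ∈ range N, (2 * i + 1) = N ^ 2 := by
    induction N with
    | zero => rfl
    | succ n ih => rw [sum_range_succ, ih]; ring
  have prefactor : w ^ N * (q ^ N ^ 2)⁻¹ = ∏ i ∈ range N, w * (q ^ (2 * i + 1))⁻¹ := by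
    rw [prod_mul_distrib, prod_const, card_range, prod_inv_distrib, prod_pow_eq_pow_sum, sum_odd]
  rw [prefactor, ← prod_mul_distrib, ← prod_range_reflect]
  refine prod_congr rfl fun i hi ↦ ?_
  have exponent : (2 * (N - 1 - i : ℕ) + 1 - 2 * N : ℤ) = -((2 * i + 1 : ℕ) : ℤ) := by
    have := mem_range.mp hi
    omega
  rw [exponent, zpow_neg, zpow_natCast]
  field_simp
  ring

lemma prod_range_two_mul_one_add_mul_zpow (hq : q ≠ 0) (hw : w ≠ 0) (N : ℕ) :
    ∏ i ∈ range (2 * N), (1 + w * q ^ (1 - 2 * N : ℤ) * (q ^ 2) ^ i) = w ^ N * (q ^ N ^ 2)⁻¹ *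
      ∏ i ∈ range N, (1 + w * q ^ (2 * i + 1)) * (1 + w⁻¹ * q ^ (2 * i + 1)) := by
  have base (i : ℕ) : w * q ^ (1 - 2 * N : ℤ) * (q ^ 2) ^ i = w * q ^ (2 * i + 1 - 2 * N : ℤ) := by
    rw [← pow_mul, mul_assoc, ← zpow_natCast q, ← zpow_add₀ hq]
    congr 2
    push_cast
    ring
  simp only [base]
  rw [two_mul, prod_range_add, prod_one_add_mul_zpow_sub hq hw, mul_assoc, prod_mul_distrib,
    mul_comm (∏ i ∈ range N, (1 + w * _))]
  congr 2
  refine prod_congr rfl fun i _ ↦ ?_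
  rw [← zpow_natCast q (2 * i + 1)]
  congr 3
  push_cast
  ring

lemma prod_one_add_mul_prod_one_add_inv (hq : q ≠ 0) (hw : w ≠ 0) (N : ℕ) :
    ∏ i ∈ range N, (1 + w * q ^ (2 * i + 1)) * (1 + w⁻¹ * q ^ (2 * i + 1)) =
      ∑ j ∈ Icc (-N : ℤ) N, gaussBinom (q ^ 2) (2 * N) (N + j).toNat * (w ^ j * q ^ j ^ 2) := by
  have two_mul_choose_two (k : ℕ) : 2 * (k.choose 2 : ℤ) = k ^ 2 - k := by
    induction k with
    | zero => rfl
    | succ k ih => rw [Nat.choose_succ_succ' k 1, Nat.choose_one_right]; push_cast; linarith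
  rw [← mul_right_inj' (mul_ne_zero (pow_ne_zero N hw) (inv_ne_zero (pow_ne_zero (N ^ 2) hq))),
    ← prod_range_two_mul_one_add_mul_zpow hq hw, prod_one_add_mul_pow_eq_sum_gaussBinom, mul_sum]
  refine sum_bij (fun k _ ↦ (k : ℤ) - N) ?_ (by simp) (fun j hj ↦ ⟨(N + j).toNat, ?_, ?_⟩) ?_
  · intro k hk
    simp only [mem_range, mem_Icc] at *
    omega
  · simp only [mem_range, mem_Icc] at *
    omega
  · simp only [mem_Icc] at hj
    omega
  · intro k _
    have w_exponent : w ^ k = w ^ N * w ^ (k - N : ℤ) := by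
      rw [← zpow_natCast w, ← zpow_natCast w, ← zpow_add₀ hw, add_sub_cancel]
    have q_exponent : (q ^ 2) ^ k.choose 2 * (q ^ (1 - 2 * N : ℤ)) ^ k =
        (q ^ N ^ 2)⁻¹ * q ^ (k - N : ℤ) ^ 2 := by
      rw [← pow_mul, ← zpow_natCast q, ← zpow_natCast q, ← zpow_natCast (q ^ _), ← zpow_mul,
        ← zpow_neg, ← zpow_add₀ hq, ← zpow_add₀ hq]
      congr 1
      push_cast
      linear_combination two_mul_choose_two k
    rw [add_sub_cancel, Int.toNat_natCast, mul_pow, w_exponent]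
    linear_combination gaussBinom (q ^ 2) (2 * N) k * w ^ N * w ^ (k - N : ℤ) * q_exponent

end FiniteTripleProduct

section QPochhammerLimit

variable {𝕜 : Type*} [NormedField 𝕜] {Q : 𝕜}

lemma one_sub_pow_succ_ne_zero (hQ : ‖Q‖ < 1) (n : ℕ) : 1 - Q ^ (n + 1) ≠ 0 := by
  refine sub_ne_zero.mpr fun h ↦ ?_
  have := congrArg norm h
  rw [norm_one, norm_pow] at this
  exact (pow_lt_one₀ (norm_nonneg Q) hQ n.succ_ne_zero).ne this.symm

lemma qPochhammer_ne_zero (hQ : ‖Q‖ < 1) (n : ℕ) : qPochhammer Q n ≠ 0 :=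
  prod_ne_zero_iff.mpr fun i _ ↦ one_sub_pow_succ_ne_zero hQ i

lemma gaussBinom_eq_mul_inv (hQ : ‖Q‖ < 1) (a b : ℕ) :
    gaussBinom Q (a + b) a =
      qPochhammer Q (a + b) * ((qPochhammer Q a)⁻¹ * (qPochhammer Q b)⁻¹) := by
  rw [← gaussBinom_mul_qPochhammer_mul_qPochhammer]
  have := qPochhammer_ne_zero hQ a
  have := qPochhammer_ne_zero hQ b
  field_simp

lemma summable_norm_pow_succ (hQ : ‖Q‖ < 1) : Summable fun n : ℕ ↦ ‖Q ^ (n + 1)‖ := by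
  simpa only [norm_pow] using
    (summable_nat_add_iff 1).mpr (summable_geometric_of_lt_one (norm_nonneg Q) hQ)

variable [CompleteSpace 𝕜]

lemma multipliable_one_sub_pow_succ (hQ : ‖Q‖ < 1) : Multipliable fun n : ℕ ↦ 1 - Q ^ (n + 1) := by
  simpa only [sub_eq_add_neg] using multipliable_one_add_of_summable (f := fun n ↦ -Q ^ (n + 1))
    (by simpa only [norm_neg] using summable_norm_pow_succ hQ)

lemma tendsto_qPochhammer (hQ : ‖Q‖ < 1) :
    Tendsto (qPochhammer Q) atTop (𝓝 (∏' n : ℕ, (1 - Q ^ (n + 1)))) :=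
  (multipliable_one_sub_pow_succ hQ).tendsto_prod_tprod_nat

lemma tprod_one_sub_pow_succ_ne_zero (hQ : ‖Q‖ < 1) : ∏' n : ℕ, (1 - Q ^ (n + 1)) ≠ 0 := by
  simpa only [sub_eq_add_neg] using tprod_one_add_ne_zero_of_summable (f := fun n ↦ -Q ^ (n + 1))
    (fun n ↦ by simpa only [sub_eq_add_neg] using one_sub_pow_succ_ne_zero hQ n)
    (by simpa only [norm_neg] using summable_norm_pow_succ hQ)

lemma tendsto_gaussBinom_add (hQ : ‖Q‖ < 1) {ι : Type*} {l : Filter ι} {a b : ι → ℕ}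
    (ha : Tendsto a l atTop) (hb : Tendsto b l atTop) :
    Tendsto (fun i ↦ gaussBinom Q (a i + b i) (a i)) l (𝓝 (∏' n : ℕ, (1 - Q ^ (n + 1)))⁻¹) := by
  have hP := tendsto_qPochhammer hQ
  have hP0 := tprod_one_sub_pow_succ_ne_zero hQ
  have key := (hP.comp (tendsto_atTop_mono (fun i ↦ Nat.le_add_right (a i) (b i)) ha)).mul
    (((hP.inv₀ hP0).comp ha).mul ((hP.inv₀ hP0).comp hb))
  rw [mul_inv_cancel_left₀ hP0] at key
  exact key.congr fun i ↦ (gaussBinom_eq_mul_inv hQ (a i) (b i)).symm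

lemma exists_norm_gaussBinom_le (hQ : ‖Q‖ < 1) : ∃ C, ∀ n k, ‖gaussBinom Q n k‖ ≤ C := by
  have hP := tendsto_qPochhammer hQ
  obtain ⟨A, hA⟩ := (Metric.isBounded_range_of_tendsto _ hP).exists_norm_le
  obtain ⟨B, hB⟩ := (Metric.isBounded_range_of_tendsto _
    (hP.inv₀ (tprod_one_sub_pow_succ_ne_zero hQ))).exists_norm_le
  simp only [Set.forall_mem_range] at hA hB
  have hA0 : 0 ≤ A := (norm_nonneg _).trans (hA 0)
  have hB0 : 0 ≤ B := (norm_nonneg _).trans (hB 0)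
  refine ⟨A * (B * B), fun n k ↦ ?_⟩
  rcases lt_or_ge n k with hnk | hkn
  · rw [gaussBinom_eq_zero_of_lt Q hnk, norm_zero]
    positivity
  · obtain ⟨b, rfl⟩ := Nat.exists_eq_add_of_le hkn
    rw [gaussBinom_eq_mul_inv hQ, norm_mul, norm_mul]
    gcongr
    exacts [hA _, hB _, hB _]

end QPochhammerLimit

section TripleProduct

lemma summable_norm_pow_mul_pow_sq {𝕜 : Type*} [NormedField 𝕜] {q : 𝕜} (w : 𝕜) (hq : ‖q‖ < 1) :
    Summable fun n : ℕ ↦ ‖w ^ n * q ^ n ^ 2‖ := by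
  have base_tendsto : Tendsto (fun n : ℕ ↦ ‖w * q ^ n‖) atTop (𝓝 0) := by
    simpa using ((tendsto_pow_atTop_nhds_zero_of_norm_lt_one hq).const_mul w).norm
  refine .of_norm_bounded_eventually_nat summable_geometric_two ?_
  filter_upwards [base_tendsto.eventually_le_const (show (0 : ℝ) < 1 / 2 by norm_num)] with n hn
  rw [norm_norm, sq, pow_mul, ← mul_pow, norm_pow]
  gcongr

lemma summable_norm_zpow_mul_zpow_sq {𝕜 : Type*} [NormedField 𝕜] {q : 𝕜} (w : 𝕜) (hq : ‖q‖ < 1) :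
    Summable fun j : ℤ ↦ ‖w ^ j * q ^ j ^ 2‖ := by
  refine .of_nat_of_neg ?_ ?_
  · exact_mod_cast summable_norm_pow_mul_pow_sq w hq
  · simpa only [neg_sq, zpow_neg, zpow_natCast, ← inv_pow, ← Nat.cast_pow] using
      summable_norm_pow_mul_pow_sq w⁻¹ hq

lemma tendsto_sum_Icc_int_of_dominated {E : Type*} [NormedAddCommGroup E] [CompleteSpace E]
    {f : ℕ → ℤ → E} {g : ℤ → E} {bound : ℤ → ℝ} (h_sum : Summable bound)
    (h_lim : ∀ j, Tendsto (fun N ↦ f N j) atTop (𝓝 (g j))) (h_bound : ∀ N j, ‖f N j‖ ≤ bound j) :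
    Tendsto (fun N : ℕ ↦ ∑ j ∈ Icc (-N : ℤ) N, f N j) atTop (𝓝 (∑' j, g j)) := by
  refine (tendsto_tsum_of_dominated_convergence h_sum (fun j ↦ (h_lim j).congr' ?_)
    (.of_forall fun N j ↦ (norm_indicator_le_norm_self _ _).trans (h_bound N j))).congr
    fun N ↦ (sum_eq_tsum_indicator _ _).symm
  filter_upwards [eventually_ge_atTop j.natAbs] with N hN
  exact (Set.indicator_of_mem (by rw [coe_Icc, Set.mem_Icc]; omega) _).symm

variable {𝕜 : Type*} [NormedField 𝕜] [CompleteSpace 𝕜] {q w : 𝕜}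

lemma tendsto_qPochhammer_mul_gaussBinom (hq : ‖q‖ < 1) (j : ℤ) :
    Tendsto (fun N : ℕ ↦ qPochhammer q N * gaussBinom q (2 * N) (N + j).toNat) atTop (𝓝 1) := by
  have toNat_tendsto (i : ℤ) : Tendsto (fun N : ℕ ↦ (N + i).toNat) atTop atTop :=
    tendsto_atTop.mpr fun b ↦ (eventually_ge_atTop (b + i.natAbs)).mono fun N hN ↦ by omega
  have key := (tendsto_qPochhammer hq).mul
    (tendsto_gaussBinom_add hq (toNat_tendsto j) (toNat_tendsto (-j)))
  rw [mul_inv_cancel₀ (tprod_one_sub_pow_succ_ne_zero hq)] at key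
  refine key.congr' ?_
  filter_upwards [eventually_ge_atTop j.natAbs] with N hN
  rw [show (N + j).toNat + (N + -j).toNat = 2 * N by omega]

lemma multipliable_one_add_mul_pow_odd (hq : ‖q‖ < 1) (c : 𝕜) :
    Multipliable fun n : ℕ ↦ 1 + c * q ^ (2 * n + 1) := by
  refine multipliable_one_add_of_summable ?_
  have := (summable_norm_pow_succ hq).comp_injective (mul_right_injective₀ (two_ne_zero (α := ℕ)))
  simpa only [norm_mul, Function.comp_def] using this.mul_left ‖c‖

theorem jacobi_triple_product (hq : ‖q‖ < 1) (hw : w ≠ 0) :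
    ∏' n : ℕ, (1 - q ^ (2 * n + 2)) * ((1 + w * q ^ (2 * n + 1)) * (1 + w⁻¹ * q ^ (2 * n + 1))) =
      ∑' j : ℤ, w ^ j * q ^ j ^ 2 := by
  rcases eq_or_ne q 0 with rfl | hq0
  · rw [tsum_eq_single 0 fun j hj ↦ by simp [zero_zpow _ (pow_ne_zero 2 hj)]]
    simp
  have hq2 : ‖q ^ 2‖ < 1 := norm_pow q 2 ▸ pow_lt_one₀ (norm_nonneg q) hq two_ne_zero
  have even_factor (n : ℕ) : 1 - q ^ (2 * n + 2) = 1 - (q ^ 2) ^ (n + 1) := by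
    rw [← pow_mul, mul_add_one]
  have mult := (multipliable_one_sub_pow_succ hq2).mul
    ((multipliable_one_add_mul_pow_odd hq w).mul (multipliable_one_add_mul_pow_odd hq w⁻¹))
  have partial_prod (N : ℕ) : ∏ n ∈ range N, (1 - (q ^ 2) ^ (n + 1)) *
      ((1 + w * q ^ (2 * n + 1)) * (1 + w⁻¹ * q ^ (2 * n + 1))) = ∑ j ∈ Icc (-N : ℤ) N,
        qPochhammer (q ^ 2) N * gaussBinom (q ^ 2) (2 * N) (N + j).toNat * (w ^ j * q ^ j ^ 2) := by
    simp only [prod_mul_distrib (f := fun n ↦ 1 - (q ^ 2) ^ (n + 1)),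
      prod_one_add_mul_prod_one_add_inv hq0 hw, mul_sum, mul_assoc, qPochhammer]
  obtain ⟨A, hA⟩ := (Metric.isBounded_range_of_tendsto _ (tendsto_qPochhammer hq2)).exists_norm_le
  obtain ⟨B, hB⟩ := exists_norm_gaussBinom_le hq2
  simp only [even_factor]
  refine tendsto_nhds_unique mult.tendsto_prod_tprod_nat ?_
  simp only [partial_prod]
  refine tendsto_sum_Icc_int_of_dominated
    ((summable_norm_zpow_mul_zpow_sq w hq).mul_left (A * B)) (fun j ↦ ?_) fun N j ↦ ?_
  · simpa only [one_mul] using (tendsto_qPochhammer_mul_gaussBinom hq2 j).mul_const _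
  · rw [norm_mul, norm_mul]
    gcongr
    exacts [(norm_nonneg _).trans (hA _ ⟨0, rfl⟩), hA _ ⟨N, rfl⟩, hB _ _]

end TripleProduct

section Theta

section NormedField

variable {𝕜 : Type*} [NormedField 𝕜]

/-- The theta function `ϑ(q) = ∑_{j ∈ ℤ} q^(j²) = 1 + 2 ∑_{n ≥ 1} q^(n²)` in the nome `q`. It is
defined over any normed field so that `ϑ(‖q‖)` also makes sense. -/
noncomputable def nomeTheta (q : 𝕜) : 𝕜 := ∑' j : ℤ, q ^ j ^ 2

variable {q : 𝕜}

lemma summable_norm_zpow_sq (hq : ‖q‖ < 1) : Summable fun j : ℤ ↦ ‖q ^ j ^ 2‖ := by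
  simpa only [one_zpow, one_mul] using summable_norm_zpow_mul_zpow_sq 1 hq

lemma norm_nomeTheta_le (hq : ‖q‖ < 1) : ‖nomeTheta q‖ ≤ nomeTheta ‖q‖ := by
  rw [nomeTheta, nomeTheta]
  simp only [← norm_zpow]
  exact norm_tsum_le_tsum_norm (summable_norm_zpow_sq hq)

variable [CompleteSpace 𝕜]

lemma nomeTheta_eq_one_add (hq : ‖q‖ < 1) :
    nomeTheta q = 1 + 2 * ∑' n : ℕ, q ^ (n + 1) ^ 2 := by
  have summable_int := (summable_norm_zpow_sq hq).of_norm
  have even : Function.Even fun j : ℤ ↦ q ^ j ^ 2 := fun j ↦ by simp only [neg_sq]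
  rw [nomeTheta, tsum_int_eq_zero_add_two_mul_tsum_pnat even summable_int,
    tsum_pnat_eq_tsum_succ (f := fun n : ℕ ↦ q ^ (n : ℤ) ^ 2), nsmul_eq_mul]
  norm_cast
  rw [zero_pow two_ne_zero, pow_zero]

lemma nomeTheta_eq_tprod (hq : ‖q‖ < 1) :
    nomeTheta q = ∏' n : ℕ, (1 - q ^ (2 * n + 2)) * (1 + q ^ (2 * n + 1)) ^ 2 := by
  simpa only [nomeTheta, one_zpow, one_mul, inv_one, ← sq] using
    (jacobi_triple_product hq one_ne_zero).symm

end NormedField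

lemma multipliableLocallyUniformlyOn_ball_of_norm_sub_one_le {f : ℕ → ℂ → ℂ} {C : ℝ}
    (hf : ∀ n, ContinuousOn (f n) (Metric.ball 0 1))
    (hC : ∀ n z, ‖z‖ < 1 → ‖f n z - 1‖ ≤ C * ‖z‖ ^ n) :
    MultipliableLocallyUniformlyOn f (Metric.ball 0 1) := by
  have hC0 : 0 ≤ C := by simpa using (norm_nonneg _).trans (hC 0 0 (by simp))
  refine (hasProdLocallyUniformlyOn_of_forall_compact (g := fun z ↦ ∏' n, f n z)
    Metric.isOpen_ball fun K hK hKc ↦ ?_).multipliableLocallyUniformlyOn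
  rcases K.eq_empty_or_nonempty with rfl | hne
  · simp [hasProdUniformlyOn_iff_tendstoUniformlyOn, tendstoUniformlyOn_empty]
  obtain ⟨z₀, hz₀, hmax⟩ := hKc.exists_isMaxOn hne continuous_norm.continuousOn
  have hz₀_lt : ‖z₀‖ < 1 := mem_ball_zero_iff.mp (hK hz₀)
  simpa only [add_sub_cancel] using Summable.hasProdUniformlyOn_nat_one_add
    (f := fun n z ↦ f n z - 1) hKc
    ((summable_geometric_of_lt_one (norm_nonneg z₀) hz₀_lt).mul_left C)
    (.of_forall fun n z hz ↦ (hC n z (mem_ball_zero_iff.mp (hK hz))).trans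
      (by gcongr; exact hmax hz))
    fun n ↦ ((hf n).mono hK).sub continuousOn_const

lemma norm_thetaFactor_sub_one_le {z : ℂ} (hz : ‖z‖ < 1) (n : ℕ) :
    ‖(1 - z ^ (2 * n + 2)) * (1 + z ^ (2 * n + 1)) ^ 2 - 1‖ ≤ 7 * ‖z‖ ^ n := by
  have norm_le (k : ℕ) (hk : n ≤ k) : ‖z ^ k‖ ≤ ‖z‖ ^ n :=
    (norm_pow z k).trans_le (pow_le_pow_of_le_one (norm_nonneg z) hz.le hk)
  have a_le := norm_le (2 * n + 2) (by omega)
  have b_le := norm_le (2 * n + 1) (by omega)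
  have a_le_one : ‖z ^ (2 * n + 2)‖ ≤ 1 := a_le.trans (pow_le_one₀ (norm_nonneg z) hz.le)
  have b_le_one : ‖z ^ (2 * n + 1)‖ ≤ 1 := b_le.trans (pow_le_one₀ (norm_nonneg z) hz.le)
  generalize z ^ (2 * n + 2) = a, z ^ (2 * n + 1) = b at *
  calc ‖(1 - a) * (1 + b) ^ 2 - 1‖ = ‖b * (2 + b) - a * (1 + b) ^ 2‖ := by ring_nf
    _ ≤ ‖b‖ * (2 + ‖b‖) + ‖a‖ * (1 + ‖b‖) ^ 2 := by
      refine (norm_sub_le _ _).trans ?_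
      rw [norm_mul, norm_mul, norm_pow]
      gcongr
      · simpa using norm_add_le 2 b
      · simpa using norm_add_le 1 b
    _ ≤ ‖z‖ ^ n * (2 + 1) + ‖z‖ ^ n * (1 + 1) ^ 2 := by gcongr
    _ = 7 * ‖z‖ ^ n := by ring

lemma thetaFactor_ne_zero {z : ℂ} (hz : ‖z‖ < 1) (n : ℕ) :
    (1 - z ^ (2 * n + 2)) * (1 + z ^ (2 * n + 1)) ^ 2 ≠ 0 := by
  refine mul_ne_zero (one_sub_pow_succ_ne_zero hz _) (pow_ne_zero 2 ?_)
  have h := one_sub_pow_succ_ne_zero (Q := -z) (by rwa [norm_neg]) (2 * n)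
  rwa [Odd.neg_pow ⟨n, rfl⟩, sub_neg_eq_add] at h

lemma multipliableLocallyUniformlyOn_thetaFactor :
    MultipliableLocallyUniformlyOn
      (fun (n : ℕ) (z : ℂ) ↦ (1 - z ^ (2 * n + 2)) * (1 + z ^ (2 * n + 1)) ^ 2)
      (Metric.ball 0 1) :=
  multipliableLocallyUniformlyOn_ball_of_norm_sub_one_le (fun _ ↦ by fun_prop)
    fun n _ hz ↦ norm_thetaFactor_sub_one_le hz n

lemma nomeTheta_ne_zero {z : ℂ} (hz : ‖z‖ < 1) : nomeTheta z ≠ 0 := by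
  have h := tprod_one_add_ne_zero_of_summable
    (f := fun n : ℕ ↦ (1 - z ^ (2 * n + 2)) * (1 + z ^ (2 * n + 1)) ^ 2 - 1)
    (fun n ↦ by simpa only [add_sub_cancel] using thetaFactor_ne_zero hz n)
    (.of_nonneg_of_le (fun _ ↦ norm_nonneg _) (norm_thetaFactor_sub_one_le hz)
      ((summable_geometric_of_lt_one (norm_nonneg z) hz).mul_left 7))
  simpa only [add_sub_cancel, ← nomeTheta_eq_tprod hz] using h

lemma differentiableOn_nomeTheta : DifferentiableOn ℂ (nomeTheta : ℂ → ℂ) (Metric.ball 0 1) := by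
  have h := multipliableLocallyUniformlyOn_thetaFactor.hasProdLocallyUniformlyOn.differentiableOn
    (.of_forall fun s ↦ by fun_prop) Metric.isOpen_ball
  exact h.congr fun z hz ↦ nomeTheta_eq_tprod (mem_ball_zero_iff.mp hz)

lemma norm_mul_logDeriv_one_add_mul_pow_le {c z : ℂ} (hc : ‖c‖ = 1) (hz : ‖z‖ < 1) {k : ℕ}
    (hk : k ≠ 0) :
    ‖z * logDeriv (fun z ↦ 1 + c * z ^ k) z‖ ≤ k * (‖z‖ ^ k / (1 - ‖z‖ ^ k)) := by
  have pow_lt : ‖z‖ ^ k < 1 := pow_lt_one₀ (norm_nonneg z) hz hk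
  have denominator : 1 - ‖z‖ ^ k ≤ ‖1 + c * z ^ k‖ := by
    simpa [hc] using norm_sub_norm_le (1 : ℂ) (-(c * z ^ k))
  have formula : z * logDeriv (fun z ↦ 1 + c * z ^ k) z = k * (c * z ^ k) / (1 + c * z ^ k) := by
    rw [logDeriv_apply, (((hasDerivAt_pow k z).const_mul c).const_add 1).deriv,
      ← pow_sub_one_mul hk z]
    ring
  rw [formula, norm_div, norm_mul, norm_mul, hc, one_mul, norm_pow, Complex.norm_natCast,
    mul_div_assoc]
  gcongr

lemma norm_mul_logDeriv_thetaFactor_le {z : ℂ} (hz : ‖z‖ < 1) (n : ℕ) :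
    ‖z * logDeriv (fun z ↦ (1 - z ^ (2 * n + 2)) * (1 + z ^ (2 * n + 1)) ^ 2) z‖ ≤
      (2 * n + 2 : ℕ) * (‖z‖ ^ (2 * n + 2) / (1 - ‖z‖ ^ (2 * n + 2))) +
        2 * ((2 * n + 1 : ℕ) * (‖z‖ ^ (2 * n + 1) / (1 - ‖z‖ ^ (2 * n + 1)))) := by
  obtain ⟨even_ne, odd_ne⟩ := mul_ne_zero_iff.mp (thetaFactor_ne_zero hz n)
  have even_le := norm_mul_logDeriv_one_add_mul_pow_le (c := -1) (by simp) hz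
    (2 * n + 1).succ_ne_zero
  have odd_le := norm_mul_logDeriv_one_add_mul_pow_le norm_one hz (2 * n).succ_ne_zero
  simp only [neg_one_mul, ← sub_eq_add_neg] at even_le
  simp only [one_mul] at odd_le
  rw [logDeriv_mul z even_ne odd_ne (by fun_prop) (by fun_prop),
    logDeriv_fun_pow (by fun_prop), mul_add, mul_left_comm]
  refine (norm_add_le _ _).trans (add_le_add even_le ?_)
  rw [norm_mul, Nat.cast_ofNat, Complex.norm_ofNat]
  gcongr

end Theta

section LambertSeries

lemma sq_add_pow_four_div_three_le_sinh_sq (v : ℝ) : v ^ 2 + v ^ 4 / 3 ≤ Real.sinh v ^ 2 := by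
  have cosh_series := sum_le_hasSum (range 3)
    (fun n _ ↦ div_nonneg ((even_two_mul n).pow_nonneg _) (Nat.cast_nonneg _))
    (Real.hasSum_cosh (2 * v))
  have double := Real.cosh_two_mul v
  have := Real.cosh_sq v
  norm_num [sum_range_succ, Nat.factorial] at cosh_series
  linarith

lemma sq_mul_one_add_two_mul_cosh_le (y : ℝ) :
    y ^ 2 * (1 + 2 * Real.cosh y) ≤ 3 * Real.sinh y ^ 2 := by
  obtain ⟨v, rfl⟩ : ∃ v, y = 2 * v := ⟨y / 2, by ring⟩
  have lower := sq_add_pow_four_div_three_le_sinh_sq v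
  rw [Real.cosh_two_mul, Real.sinh_two_mul, mul_pow, mul_pow, mul_pow, Real.cosh_sq]
  generalize Real.sinh v ^ 2 = s at *
  obtain ⟨d, rfl⟩ : ∃ d, s = v ^ 2 + d := ⟨s - v ^ 2, by ring⟩
  nlinarith [sq_nonneg d, mul_nonneg (sq_nonneg v) (show 0 ≤ d by nlinarith [sq_nonneg (v ^ 2)])]

lemma hasSum_even_add_two_mul_odd_coe_mul_pow {x : ℝ} (hx : |x| < 1) :
    HasSum (fun n : ℕ ↦ (2 * n + 2 : ℕ) * x ^ (2 * n + 2) + 2 * ((2 * n + 1 : ℕ) * x ^ (2 * n + 1)))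
      (2 * x * (1 + x + x ^ 2) / (1 - x ^ 2) ^ 2) := by
  have hx2 : ‖x ^ 2‖ < 1 := by
    rw [norm_pow]
    exact pow_lt_one₀ (norm_nonneg x) hx two_ne_zero
  have hne : 1 - x ^ 2 ≠ 0 := (sub_pos.mpr (le_abs_self _ |>.trans_lt hx2)).ne'
  have geometric := hasSum_geometric_of_norm_lt_one hx2
  have weighted := hasSum_coe_mul_geometric_of_norm_lt_one hx2
  convert! (weighted.mul_left (2 * x ^ 2 + 4 * x)).add (geometric.mul_left (2 * x ^ 2 + 2 * x))
    using 1
  · funext n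
    push_cast
    ring
  · field_simp
    ring

lemma lambert_inner_sum_le {y : ℝ} (hy : 0 < y) :
    2 * Real.exp (-y) * (1 + Real.exp (-y) + Real.exp (-y) ^ 2) / (1 - Real.exp (-y) ^ 2) ^ 2 ≤
      3 / (2 * y ^ 2) := by
  have sinh_pos := Real.sinh_pos_iff.mpr hy
  have closed_form : 2 * Real.exp (-y) * (1 + Real.exp (-y) + Real.exp (-y) ^ 2) /
      (1 - Real.exp (-y) ^ 2) ^ 2 = (1 + 2 * Real.cosh y) / (2 * Real.sinh y ^ 2) := by
    have hsinh := sinh_pos.ne'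
    have hlt : Real.exp (-y) < 1 := Real.exp_lt_one_iff.mpr (neg_lt_zero.mpr hy)
    have hpos := Real.exp_pos (-y)
    have hne : 1 - Real.exp (-y) ^ 2 ≠ 0 := by nlinarith
    rw [Real.cosh_eq, Real.sinh_eq, ← inv_inv (Real.exp y), ← Real.exp_neg] at *
    generalize Real.exp (-y) = x at *
    field_simp
    ring
  rw [closed_form, div_le_div_iff₀ (by positivity) (by positivity)]
  linarith [sq_mul_one_add_two_mul_cosh_le y]

lemma hasSum_pow_succ_exp_neg {t : ℝ} (ht : 0 < t) {m : ℕ} (hm : m ≠ 0) :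
    HasSum (fun k : ℕ ↦ Real.exp (-(t * (k + 1))) ^ m)
      (Real.exp (-t) ^ m / (1 - Real.exp (-t) ^ m)) := by
  have lt_one : Real.exp (-t) ^ m < 1 :=
    pow_lt_one₀ (Real.exp_nonneg _) (Real.exp_lt_one_iff.mpr (neg_lt_zero.mpr ht)) hm
  rw [div_eq_mul_inv]
  convert! (hasSum_geometric_of_lt_one (by positivity) lt_one).mul_left _ using 2 with k
  have exp_eq_pow : Real.exp (-(t * (k + 1))) = Real.exp (-t) ^ (k + 1) := by
    rw [← Real.exp_nat_mul]
    congr 1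
    push_cast
    ring
  rw [exp_eq_pow]
  ring

lemma sum_lambert_le {t : ℝ} (ht : 0 < t) (N : ℕ) :
    ∑ n ∈ range N, ((2 * n + 2 : ℕ) *
        (Real.exp (-t) ^ (2 * n + 2) / (1 - Real.exp (-t) ^ (2 * n + 2))) +
      2 * ((2 * n + 1 : ℕ) *
        (Real.exp (-t) ^ (2 * n + 1) / (1 - Real.exp (-t) ^ (2 * n + 1))))) ≤
      π ^ 2 / (4 * t ^ 2) := by
  have expanded := hasSum_sum fun n (_ : n ∈ range N) ↦
    ((hasSum_pow_succ_exp_neg ht (2 * n + 1).succ_ne_zero).mul_left ((2 * n + 2 : ℕ) : ℝ)).add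
      (((hasSum_pow_succ_exp_neg ht (2 * n).succ_ne_zero).mul_left
        ((2 * n + 1 : ℕ) : ℝ)).mul_left 2)
  have zeta : HasSum (fun k : ℕ ↦ 3 / (2 * (t * (k + 1)) ^ 2)) (π ^ 2 / (4 * t ^ 2)) := by
    convert! ((hasSum_nat_add_iff' 1).mpr hasSum_zeta_two).mul_left (3 / (2 * t ^ 2)) using 1
    · funext k
      push_cast
      field_simp
    · rw [sum_range_one, Nat.cast_zero, zero_pow two_ne_zero, div_zero, sub_zero]
      field_simp
      norm_num
  refine hasSum_le (fun k ↦ ?_) expanded zeta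
  have hy : 0 < t * (k + 1) := by positivity
  have abs_lt : |Real.exp (-(t * (k + 1)))| < 1 := by
    rw [abs_of_pos (Real.exp_pos _)]
    exact Real.exp_lt_one_iff.mpr (neg_lt_zero.mpr hy)
  exact (sum_le_hasSum (range N) (fun n _ ↦ by positivity)
    (hasSum_even_add_two_mul_odd_coe_mul_pow abs_lt)).trans (lambert_inner_sum_le hy)

lemma norm_mul_logDeriv_nomeTheta_le {t : ℝ} (ht : 0 < t) {z : ℂ} (hz : ‖z‖ = Real.exp (-t)) :
    ‖z * logDeriv nomeTheta z‖ ≤ π ^ 2 / (4 * t ^ 2) := by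
  have hz_lt : ‖z‖ < 1 := hz ▸ Real.exp_lt_one_iff.mpr (neg_lt_zero.mpr ht)
  have hz_ne : z ≠ 0 := norm_pos_iff.mp (hz ▸ Real.exp_pos _)
  have hz_mem : z ∈ Metric.ball 0 1 := mem_ball_zero_iff.mpr hz_lt
  have partial_le (N : ℕ) : ∑ n ∈ range N, ‖z * logDeriv
      (fun z ↦ (1 - z ^ (2 * n + 2)) * (1 + z ^ (2 * n + 1)) ^ 2) z‖ ≤ π ^ 2 / (4 * t ^ 2) := by
    refine (sum_le_sum fun n _ ↦ norm_mul_logDeriv_thetaFactor_le hz_lt n).trans ?_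
    simpa only [hz] using sum_lambert_le ht N
  have summable := summable_of_sum_range_le (fun _ ↦ norm_nonneg _) partial_le
  have theta_eq : nomeTheta =ᶠ[𝓝 z]
      fun z ↦ ∏' n : ℕ, (1 - z ^ (2 * n + 2)) * (1 + z ^ (2 * n + 1)) ^ 2 := by
    filter_upwards [Metric.isOpen_ball.mem_nhds hz_mem] with w hw
    exact nomeTheta_eq_tprod (mem_ball_zero_iff.mp hw)
  have termwise : z * logDeriv nomeTheta z = ∑' n : ℕ, z * logDeriv
      (fun z ↦ (1 - z ^ (2 * n + 2)) * (1 + z ^ (2 * n + 1)) ^ 2) z := by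
    rw [logDeriv_apply, theta_eq.deriv_eq, theta_eq.eq_of_nhds, ← logDeriv_apply,
      logDeriv_tprod_eq_tsum Metric.isOpen_ball hz_mem (thetaFactor_ne_zero hz_lt)
        (fun n ↦ by fun_prop) ((summable_mul_left_iff hz_ne).mp summable.of_norm)
        multipliableLocallyUniformlyOn_thetaFactor
        (nomeTheta_eq_tprod hz_lt ▸ nomeTheta_ne_zero hz_lt), tsum_mul_left]
  rw [termwise]
  exact (norm_tsum_le_tsum_norm summable).trans (summable.tsum_le_of_sum_range_le partial_le)

end LambertSeries

section HolomorphicPower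

lemma exists_differentiableOn_exp_eq {f : ℂ → ℂ} {c : ℂ} {r : ℝ}
    (hf : DifferentiableOn ℂ f (Metric.ball c r)) (hne : ∀ z ∈ Metric.ball c r, f z ≠ 0) :
    ∃ g : ℂ → ℂ, DifferentiableOn ℂ g (Metric.ball c r) ∧ g c = Complex.log (f c) ∧
      ∀ z ∈ Metric.ball c r, Complex.exp (g z) = f z := by
  obtain ⟨g, hg⟩ := ((hf.deriv Metric.isOpen_ball).div hf hne).isExactOn_ball
  have hasDerivAt_zero : ∀ z ∈ Metric.ball c r,
      HasDerivAt (fun z ↦ f z * Complex.exp (-g z)) 0 z := by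
    intro z hz
    have := hne z hz
    convert! (hf.differentiableAt (Metric.isOpen_ball.mem_nhds hz)).hasDerivAt.mul
      (hg z hz).neg.cexp using 1
    simp only [Pi.div_apply]
    field_simp
    ring
  have deriv_zero : Set.EqOn (deriv fun z ↦ f z * Complex.exp (-g z)) 0 (Metric.ball c r) :=
    fun z hz ↦ (hasDerivAt_zero z hz).deriv
  refine ⟨fun z ↦ g z - g c + Complex.log (f c),
    fun z hz ↦ (((hg z hz).sub_const _).add_const _).differentiableAt.differentiableWithinAt,
    by simp, fun z hz ↦ ?_⟩
  have hc : c ∈ Metric.ball c r := Metric.mem_ball_self (dist_nonneg.trans_lt hz)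
  have const : f z * Complex.exp (-g z) = f c * Complex.exp (-g c) :=
    Metric.isOpen_ball.is_const_of_deriv_eq_zero (convex_ball c r).isPreconnected
      (fun w hw ↦ (hasDerivAt_zero w hw).differentiableAt.differentiableWithinAt) deriv_zero hz hc
  rw [Complex.exp_add, Complex.exp_sub, Complex.exp_log (hne c hc)]
  rw [Complex.exp_neg, Complex.exp_neg] at const
  have := Complex.exp_ne_zero (g z)
  have := Complex.exp_ne_zero (g c)
  field_simp at const ⊢
  linear_combination -const

lemma exists_differentiableOn_eventuallyEq_cpow {f : ℂ → ℂ} {c : ℂ} {r : ℝ} (hr : 0 < r)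
    (hf : DifferentiableOn ℂ f (Metric.ball c r)) (hne : ∀ z ∈ Metric.ball c r, f z ≠ 0)
    (hc : f c ∈ Complex.slitPlane) (u : ℝ) :
    ∃ g : ℂ → ℂ, DifferentiableOn ℂ g (Metric.ball c r) ∧ (g =ᶠ[𝓝 c] fun z ↦ f z ^ (u : ℂ)) ∧
      ∀ z ∈ Metric.ball c r, ‖g z‖ = ‖f z‖ ^ u ∧ deriv g z = u * logDeriv f z * g z := by
  obtain ⟨l, hl, hlc, exp_l⟩ := exists_differentiableOn_exp_eq hf hne
  have ball_nhds : ∀ z ∈ Metric.ball c r, Metric.ball c r ∈ 𝓝 z :=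
    fun z hz ↦ Metric.isOpen_ball.mem_nhds hz
  have hc_mem : c ∈ Metric.ball c r := Metric.mem_ball_self hr
  refine ⟨fun z ↦ Complex.exp (u * l z), (hl.const_mul _).cexp, ?_, fun z hz ↦ ⟨?_, ?_⟩⟩
  · have im_mem : (l c).im ∈ Set.Ioo (-π) π := by
      rw [hlc, Complex.log_im]
      exact ⟨Complex.neg_pi_lt_arg _,
        (Complex.arg_le_pi _).lt_of_ne (Complex.mem_slitPlane_iff_arg.mp hc).1⟩
    have im_cont : ContinuousAt (fun z ↦ (l z).im) c := Complex.continuous_im.continuousAt.comp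
      (hl.differentiableAt (ball_nhds c hc_mem)).continuousAt
    filter_upwards [ball_nhds c hc_mem, im_cont.preimage_mem_nhds (isOpen_Ioo.mem_nhds im_mem)]
      with z hz him
    rw [Complex.cpow_def_of_ne_zero (hne z hz), ← exp_l z hz, Complex.log_exp him.1 him.2.le,
      mul_comm]
  · rw [← exp_l z hz, Complex.norm_exp, Complex.norm_exp, ← Real.exp_mul, Complex.re_ofReal_mul,
      mul_comm]
  · have hl_at := hl.differentiableAt (ball_nhds z hz)
    have exp_l_eq : (fun z ↦ Complex.exp (l z)) =ᶠ[𝓝 z] f := by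
      filter_upwards [ball_nhds z hz] with w hw using exp_l w hw
    have logDeriv_f : logDeriv f z = deriv l z := by
      rw [logDeriv_apply, ← exp_l_eq.deriv_eq, ← exp_l z hz, hl_at.hasDerivAt.cexp.deriv,
        mul_div_cancel_left₀ _ (Complex.exp_ne_zero _)]
    rw [logDeriv_f, (hl_at.hasDerivAt.const_mul (u : ℂ)).cexp.deriv, mul_comm]

end HolomorphicPower

section TaylorCoefficients

lemma natCast_le_analyticOrderAt_of_isBigO {𝕜 E : Type*} [NontriviallyNormedField 𝕜]
    [NormedAddCommGroup E] [NormedSpace 𝕜 E] {f : 𝕜 → E} {z₀ : 𝕜} {n : ℕ} (hf : AnalyticAt 𝕜 f z₀)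
    (h : f =O[𝓝 z₀] fun z ↦ (z - z₀) ^ n) : n ≤ analyticOrderAt f z₀ := by
  by_contra! lt
  obtain ⟨k, hk⟩ := ENat.ne_top_iff_exists.mp lt.ne_top
  obtain ⟨g, hg, g_ne, f_eq⟩ := hf.analyticOrderAt_eq_natCast.mp hk.symm
  have k_lt : k < n := by rwa [← hk, Nat.cast_lt] at lt
  have g_isBigO : g =O[𝓝[≠] z₀] fun z ↦ (z - z₀) ^ (n - k) := by
    obtain ⟨C, hC⟩ := h.bound
    refine .of_bound C ?_
    filter_upwards [nhdsWithin_le_nhds hC, nhdsWithin_le_nhds f_eq, self_mem_nhdsWithin]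
      with z hz hfz z_ne
    have pos : 0 < ‖(z - z₀) ^ k‖ := norm_pos_iff.mpr (pow_ne_zero _ (sub_ne_zero.mpr z_ne))
    refine le_of_mul_le_mul_left ?_ pos
    rw [← norm_smul, ← hfz, mul_left_comm, ← norm_mul, ← pow_add, Nat.add_sub_cancel' k_lt.le]
    exact hz
  have g_tendsto : Tendsto g (𝓝[≠] z₀) (𝓝 0) := by
    refine g_isBigO.trans_tendsto (tendsto_nhdsWithin_of_tendsto_nhds ?_)
    have : Tendsto (fun z ↦ (z - z₀) ^ (n - k)) (𝓝 z₀) (𝓝 ((z₀ - z₀) ^ (n - k))) :=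
      Continuous.tendsto (by fun_prop) z₀
    rwa [sub_self, zero_pow (Nat.sub_ne_zero_of_lt k_lt)] at this
  exact g_ne (tendsto_nhds_unique (hg.continuousAt.tendsto.mono_left nhdsWithin_le_nhds) g_tendsto)

lemma iteratedDeriv_zero_polynomial_eval {𝕜 : Type*} [NontriviallyNormedField 𝕜]
    (P : Polynomial 𝕜) (m : ℕ) :
    iteratedDeriv m (fun z ↦ P.eval z) 0 = m.factorial * P.coeff m := by
  have semiconj : Function.Semiconj (fun (P : Polynomial 𝕜) z ↦ P.eval z)
      Polynomial.derivative deriv := fun P ↦ funext fun z ↦ P.deriv.symm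
  rw [iteratedDeriv_eq_iterate, ← (semiconj.iterate_right m).eq P]
  beta_reduce
  rw [← Polynomial.coeff_zero_eq_eval_zero, Polynomial.coeff_iterate_derivative, zero_add,
    Nat.descFactorial_self, nsmul_eq_mul]

lemma iteratedDeriv_zero_eq_of_isBigO_sub_polynomial {𝕜 : Type*} [NontriviallyNormedField 𝕜]
    [CompleteSpace 𝕜] [CharZero 𝕜] {f : 𝕜 → 𝕜} {P : Polynomial 𝕜} {m : ℕ} (hf : AnalyticAt 𝕜 f 0)
    (h : (fun z ↦ f z - P.eval z) =O[𝓝 0] fun z ↦ z ^ (m + 1)) :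
    iteratedDeriv m f 0 = m.factorial * P.coeff m := by
  have hP : AnalyticAt 𝕜 (fun z ↦ P.eval z) 0 :=
    AnalyticOnNhd.eval_polynomial P 0 (Set.mem_univ 0)
  have order := natCast_le_analyticOrderAt_of_isBigO (hf.fun_sub hP) (by simpa using h)
  have diff := (natCast_le_analyticOrderAt_iff_iteratedDeriv_eq_zero (hf.fun_sub hP)).mp order m
    m.lt_succ_self
  rwa [iteratedDeriv_fun_sub hf.contDiffAt hP.contDiffAt, iteratedDeriv_zero_polynomial_eval,
    sub_eq_zero] at diff

lemma isBigO_one_add_cpow_sub_sum_choose (a : ℂ) (n : ℕ) :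
    (fun z ↦ (1 + z) ^ a - ∑ j ∈ range n, Ring.choose a j * z ^ j) =O[𝓝 0] fun z ↦ z ^ n := by
  have := (Complex.one_add_cpow_hasFPowerSeriesAt_zero (a := a)).isBigO_sub_partialSum_pow n
  simpa [FormalMultilinearSeries.partialSum, binomialSeries, mul_comm,
    FormalMultilinearSeries.ofScalars, ← norm_pow] using this

lemma isBigO_pow_sub_pow {α 𝕜 : Type*} [NormedField 𝕜] {l : Filter α} {f g : α → 𝕜}
    (hf : f =O[l] (1 : α → 𝕜)) (hg : g =O[l] (1 : α → 𝕜)) (n : ℕ) :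
    (fun x ↦ f x ^ n - g x ^ n) =O[l] fun x ↦ f x - g x := by
  have sum_isBigO : (fun x ↦ ∑ i ∈ range n, f x ^ i * g x ^ (n - 1 - i)) =O[l] fun _ ↦ (1 : 𝕜) := by
    refine .fun_sum fun i _ ↦ ?_
    simpa only [Pi.one_apply, one_pow, one_mul] using (hf.pow i).mul (hg.pow (n - 1 - i))
  simpa only [geom_sum₂_mul, one_mul] using
    sum_isBigO.mul (isBigO_refl (fun x ↦ f x - g x) l)

lemma norm_iteratedDeriv_le_of_norm_mul_deriv_le {f : ℂ → ℂ} {c : ℂ} {r R C : ℝ} {n : ℕ}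
    (hr : 0 < r) (hrR : r < R) (hf : DifferentiableOn ℂ f (Metric.ball c R)) (hn : n ≠ 0)
    (hC : ∀ z ∈ Metric.sphere c r, ‖(z - c) * deriv f z‖ ≤ C) :
    ‖iteratedDeriv n f c‖ ≤ n.factorial * (C / (n * r ^ n)) := by
  have diffContOnCl : DiffContOnCl ℂ (deriv f) (Metric.ball c r) := by
    refine ((hf.deriv Metric.isOpen_ball).mono ?_).diffContOnCl
    rw [closure_ball _ hr.ne']
    exact Metric.closedBall_subset_ball hrR
  have deriv_le : ∀ z ∈ Metric.sphere c r, ‖deriv f z‖ ≤ C / r := fun z hz ↦ by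
    have := hC z hz
    rwa [norm_mul, mem_sphere_iff_norm.mp hz, ← le_div_iff₀' hr] at this
  obtain ⟨k, rfl⟩ := Nat.exists_eq_succ_of_ne_zero hn
  rw [Nat.succ_eq_add_one, iteratedDeriv_succ']
  refine (Complex.norm_iteratedDeriv_le_of_forall_mem_sphere_norm_le k hr diffContOnCl
    deriv_le).trans_eq ?_
  rw [Nat.factorial_succ, pow_succ']
  push_cast
  field_simp

end TaylorCoefficients

section ThetaPower

/-- The truncation `∑_{1 ≤ n ≤ m} 2 X^(n²)` of the power series `ϑ - 1`; it agrees with `ϑ - 1`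
up to and including degree `m`. -/
noncomputable def thetaTruncation (m : ℕ) : Polynomial ℂ :=
  ∑ n ∈ range m, 2 * Polynomial.X ^ (n + 1) ^ 2

lemma coeff_thetaTruncation_pow (j m : ℕ) :
    (thetaTruncation m ^ j).coeff m = 2 ^ j * repCount j m := by
  have truncation_eq : thetaTruncation m =
      ∑ n : Fin (m + 1) with 1 ≤ n.1, 2 * Polynomial.X ^ n.1 ^ 2 := by
    simp [thetaTruncation, sum_filter, Fin.sum_univ_succ, Finset.sum_range]
  have coeff_prod (p : Fin j → Fin (m + 1)) :
      (∏ i, 2 * Polynomial.X ^ (p i).1 ^ 2 : Polynomial ℂ).coeff m =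
        if ∑ i, (p i).1 ^ 2 = m then 2 ^ j else 0 := by
    rw [prod_mul_distrib, prod_const, card_univ, Fintype.card_fin, prod_pow_eq_pow_sum,
      ← Polynomial.C_ofNat, ← Polynomial.C_pow, Polynomial.coeff_C_mul_X_pow]
    simp only [eq_comm]
  rw [truncation_eq, sum_pow', Polynomial.finsetSum_coeff]
  simp only [coeff_prod]
  rw [← sum_filter, sum_const, nsmul_eq_mul, mul_comm, repCount]
  congr 3
  ext p
  simp only [Fintype.mem_piFinset, mem_filter, mem_univ, true_and]

lemma nomeTheta_sub_one_sub_thetaTruncation_isBigO (m : ℕ) :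
    (fun z : ℂ ↦ nomeTheta z - 1 - (thetaTruncation m).eval z) =O[𝓝 0] fun z ↦ z ^ (m + 1) := by
  refine .of_bound 4 ?_
  filter_upwards [Metric.ball_mem_nhds (0 : ℂ) (by norm_num : (0 : ℝ) < 1 / 2)] with z hz
  replace hz : ‖z‖ < 1 / 2 := mem_ball_zero_iff.mp hz
  have hz_one : ‖z‖ < 1 := by linarith
  have norm_term_le (n : ℕ) : ‖z ^ (n + m + 1) ^ 2‖ ≤ ‖z‖ ^ (m + 1) * (1 / 2) ^ n := by
    calc ‖z ^ (n + m + 1) ^ 2‖ = ‖z‖ ^ (n + m + 1) ^ 2 := norm_pow _ _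
      _ ≤ ‖z‖ ^ (m + 1 + n) := pow_le_pow_of_le_one (norm_nonneg z) hz_one.le (by nlinarith)
      _ ≤ ‖z‖ ^ (m + 1) * (1 / 2) ^ n := by rw [pow_add]; gcongr
  have summable_bound : Summable fun n : ℕ ↦ ‖z‖ ^ (m + 1) * (1 / 2 : ℝ) ^ n :=
    summable_geometric_two.mul_left _
  have summable_tail := Summable.of_norm_bounded summable_bound norm_term_le
  have tail_eq : nomeTheta z - 1 - (thetaTruncation m).eval z =
      2 * ∑' n : ℕ, z ^ (n + m + 1) ^ 2 := by
    have split := ((summable_nat_add_iff (f := fun n ↦ z ^ (n + 1) ^ 2) m).mp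
      summable_tail).sum_add_tsum_nat_add m
    rw [nomeTheta_eq_one_add hz_one, ← split]
    simp only [thetaTruncation, Polynomial.eval_finsetSum, Polynomial.eval_mul,
      Polynomial.eval_pow, Polynomial.eval_ofNat, Polynomial.eval_X, ← mul_sum]
    ring
  rw [tail_eq, norm_mul, norm_pow, Complex.norm_ofNat]
  have := tsum_of_norm_bounded (summable_bound.hasSum) norm_term_le
  rw [tsum_mul_left, tsum_geometric_two] at this
  linarith

lemma aeval_binomPoly {K : Type*} [Field K] [CharZero K] (u : K) (j : ℕ) :
    Polynomial.aeval u (binomPoly j) = Ring.choose u j := by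
  rw [Ring.choose_eq_smul, ← Polynomial.aeval_eq_smeval,
    ← Polynomial.eval_map_algebraMap (descPochhammer ℤ j), descPochhammer_map,
    descPochhammer_eval_eq_prod_range]
  simp [binomPoly, map_prod]

lemma aeval_thetaCoeff_one {K : Type*} [Field K] [CharZero K] (u : K) :
    Polynomial.aeval u (thetaCoeff 1) = 2 * u := by
  have : repCount 1 1 = 1 := by decide
  simp [thetaCoeff, aeval_binomPoly, this, Algebra.smul_def]

lemma aeval_thetaCoeff_eq_coeff (u : ℂ) {m : ℕ} (hm : m ≠ 0) :
    Polynomial.aeval u (thetaCoeff m) =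
      (∑ j ∈ range (m + 1), Polynomial.C (Ring.choose u j) * thetaTruncation m ^ j).coeff m := by
  rw [thetaCoeff, map_sum, range_eq_Ico, sum_eq_sum_Ico_succ_bot (Nat.add_one_pos m), zero_add,
    Ico_add_one_right_eq_Icc]
  simp only [Polynomial.coeff_add, Polynomial.finsetSum_coeff, Polynomial.coeff_C_mul, pow_zero,
    Polynomial.coeff_one, hm, if_false, mul_zero, zero_add, coeff_thetaTruncation_pow, map_smul,
    aeval_binomPoly]
  refine sum_congr rfl fun j _ ↦ ?_
  rw [Algebra.smul_def, mul_comm]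
  simp

lemma nomeTheta_cpow_sub_eval_isBigO (u : ℂ) (m : ℕ) :
    (fun z : ℂ ↦ nomeTheta z ^ u - (∑ j ∈ range (m + 1),
      Polynomial.C (Ring.choose u j) * thetaTruncation m ^ j).eval z) =O[𝓝 0]
      fun z ↦ z ^ (m + 1) := by
  have truncation_isBigO : (fun z ↦ (thetaTruncation m).eval z) =O[𝓝 0] (1 : ℂ → ℂ) :=
    (thetaTruncation m).continuous.continuousAt.norm.isBoundedUnder_le.isBigO_one ℂ
  have sub_one_isBigO : (fun z : ℂ ↦ nomeTheta z - 1) =O[𝓝 0] fun z ↦ z := by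
    simpa [thetaTruncation] using nomeTheta_sub_one_sub_thetaTruncation_isBigO 0
  have sub_one_tendsto : Tendsto (fun z : ℂ ↦ nomeTheta z - 1) (𝓝 0) (𝓝 0) :=
    sub_one_isBigO.trans_tendsto tendsto_id
  have sub_one_isBigO_one := sub_one_tendsto.isBigO_one ℂ
  have binomial : (fun z : ℂ ↦ nomeTheta z ^ u - ∑ j ∈ range (m + 1),
      Ring.choose u j * (nomeTheta z - 1) ^ j) =O[𝓝 0] fun z ↦ z ^ (m + 1) := by
    have := (isBigO_one_add_cpow_sub_sum_choose u (m + 1)).comp_tendsto sub_one_tendsto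
    simpa [Function.comp_def] using this.trans (sub_one_isBigO.pow (m + 1))
  have truncate : (fun z : ℂ ↦ ∑ j ∈ range (m + 1), Ring.choose u j *
      ((nomeTheta z - 1) ^ j - (thetaTruncation m).eval z ^ j)) =O[𝓝 0] fun z ↦ z ^ (m + 1) :=
    .fun_sum fun j _ ↦ ((isBigO_pow_sub_pow sub_one_isBigO_one truncation_isBigO j).trans
      (nomeTheta_sub_one_sub_thetaTruncation_isBigO m)).const_mul_left _
  refine (binomial.add truncate).congr_left fun z ↦ ?_
  simp only [mul_sub, sum_sub_distrib, Polynomial.eval_finsetSum, Polynomial.eval_mul,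
    Polynomial.eval_pow, Polynomial.eval_C, sub_add_sub_cancel]

lemma iteratedDeriv_zero_eq_aeval_thetaCoeff {f : ℂ → ℂ} {u : ℂ} {m : ℕ} (hm : m ≠ 0)
    (hf : AnalyticAt ℂ f 0) (hfu : f =ᶠ[𝓝 0] fun z ↦ nomeTheta z ^ u) :
    iteratedDeriv m f 0 = m.factorial * Polynomial.aeval u (thetaCoeff m) := by
  rw [aeval_thetaCoeff_eq_coeff u hm]
  refine iteratedDeriv_zero_eq_of_isBigO_sub_polynomial hf ?_
  exact (nomeTheta_cpow_sub_eval_isBigO u m).congr' (hfu.symm.sub .rfl) .rfl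

end ThetaPower

section CauchyEstimate

lemma abs_aeval_thetaCoeff_le {u : ℝ} (hu : 0 ≤ u) {m : ℕ} (hm : m ≠ 0) {t : ℝ} (ht : 0 < t) :
    |Polynomial.aeval u (thetaCoeff m)| ≤
      u * (π ^ 2 / (4 * t ^ 2)) * nomeTheta (Real.exp (-t)) ^ u * Real.exp (m * t) / m := by
  obtain ⟨f, hf, f_eq, hf_ball⟩ := exists_differentiableOn_eventuallyEq_cpow one_pos
    differentiableOn_nomeTheta (fun z hz ↦ nomeTheta_ne_zero (mem_ball_zero_iff.mp hz))
    (by simp [nomeTheta_eq_one_add]) u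
  have exp_lt : Real.exp (-t) < 1 := Real.exp_lt_one_iff.mpr (neg_lt_zero.mpr ht)
  have deriv_le : ∀ z ∈ Metric.sphere (0 : ℂ) (Real.exp (-t)), ‖(z - 0) * deriv f z‖ ≤
      u * (π ^ 2 / (4 * t ^ 2)) * nomeTheta (Real.exp (-t)) ^ u := fun z hz ↦ by
    replace hz : ‖z‖ = Real.exp (-t) := mem_sphere_zero_iff_norm.mp hz
    obtain ⟨norm_f, deriv_f⟩ := hf_ball z (mem_ball_zero_iff.mpr (hz ▸ exp_lt))
    calc ‖(z - 0) * deriv f z‖ = u * ‖z * logDeriv nomeTheta z‖ * ‖nomeTheta z‖ ^ u := by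
          rw [sub_zero, deriv_f, norm_mul, norm_mul, norm_mul, norm_mul, norm_f,
            Complex.norm_of_nonneg hu]
          ring
      _ ≤ _ := by
          gcongr
          · exact norm_mul_logDeriv_nomeTheta_le ht hz
          · exact hz ▸ norm_nomeTheta_le (hz ▸ exp_lt)
  have hf_zero : AnalyticAt ℂ f 0 := hf.analyticAt (Metric.ball_mem_nhds 0 one_pos)
  have cauchy := norm_iteratedDeriv_le_of_norm_mul_deriv_le (Real.exp_pos _) exp_lt hf hm deriv_le
  rw [iteratedDeriv_zero_eq_aeval_thetaCoeff hm hf_zero f_eq, ← Complex.coe_algebraMap,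
    Polynomial.aeval_algebraMap_apply, Complex.coe_algebraMap, norm_mul, Complex.norm_natCast,
    Complex.norm_real, Real.norm_eq_abs] at cauchy
  refine (le_of_mul_le_mul_left cauchy (by positivity)).trans_eq ?_
  rw [← Real.exp_nat_mul, mul_neg, Real.exp_neg (m * t), mul_comm (m : ℝ), ← div_div,
    div_inv_eq_mul]

end CauchyEstimate

section NumericalBounds

lemma nomeTheta_le_one_add_div_one_sub {s : ℝ} (h0 : 0 ≤ s) (h1 : s < 1) :
    nomeTheta s ≤ (1 + s) / (1 - s) := by
  have pow_le (n : ℕ) : ‖s ^ (n + 1) ^ 2‖ ≤ s * s ^ n := by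
    rw [← pow_succ', Real.norm_of_nonneg (by positivity)]
    exact pow_le_pow_of_le_one h0 h1.le (Nat.le_self_pow two_ne_zero _)
  have tail_le := (le_abs_self _).trans
    (tsum_of_norm_bounded ((hasSum_geometric_of_lt_one h0 h1).mul_left s) pow_le)
  rw [nomeTheta_eq_one_add (by rwa [Real.norm_of_nonneg h0])]
  have h_pos : 0 < 1 - s := sub_pos.mpr h1
  calc 1 + 2 * ∑' n : ℕ, s ^ (n + 1) ^ 2 ≤ 1 + 2 * (s * (1 - s)⁻¹) := by gcongr
    _ = (1 + s) / (1 - s) := by field_simp; ring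

lemma nomeTheta_exp_neg_pi_mul {a : ℝ} (ha : 0 < a) :
    nomeTheta (Real.exp (-(π * a))) = nomeTheta (Real.exp (-(π / a))) / √a := by
  have exp_zpow (b : ℝ) (j : ℤ) : Real.exp (-b) ^ j ^ 2 = Real.exp (-b * j ^ 2) := by
    rw [← Real.rpow_intCast, ← Real.exp_mul, Int.cast_pow]
  have poisson := Real.tsum_exp_neg_mul_int_sq ha
  rw [← Real.sqrt_eq_rpow, one_div_mul_eq_div] at poisson
  simpa only [nomeTheta, exp_zpow, neg_mul, neg_div] using poisson

lemma exp_neg_six_le : Real.exp (-6) ≤ 1 / 403 := by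
  have exp_one_pow : Real.exp 6 = Real.exp 1 ^ 6 := by rw [← Real.exp_nat_mul]; norm_num
  have lower : (2.718 : ℝ) ^ 6 ≤ Real.exp 1 ^ 6 := by
    gcongr
    exact le_trans (by norm_num) Real.exp_one_gt_d9.le
  rw [Real.exp_neg, one_div, exp_one_pow]
  gcongr
  exact le_trans (by norm_num) lower

lemma nomeTheta_exp_neg_pi_div_le_sqrt {x : ℝ} (hx : 2 ≤ x) :
    nomeTheta (Real.exp (-(1.01 * π / x))) ≤ √x := by
  have : 0 < x := by linarith
  have dual_le : Real.exp (-(π / (1.01 / x))) ≤ 1 / 403 := by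
    refine (Real.exp_le_exp.mpr ?_).trans exp_neg_six_le
    have := Real.pi_gt_d2
    rw [neg_le_neg_iff, div_div_eq_mul_div, le_div_iff₀ (by norm_num)]
    nlinarith
  have dual_theta_le : nomeTheta (Real.exp (-(π / (1.01 / x)))) ≤ √1.01 := by
    refine (nomeTheta_le_one_add_div_one_sub (Real.exp_pos _).le (by linarith)).trans ?_
    refine Real.le_sqrt_of_sq_le ?_
    have : 0 < 1 - Real.exp (-(π / (1.01 / x))) := by linarith
    calc ((1 + Real.exp (-(π / (1.01 / x)))) / (1 - Real.exp (-(π / (1.01 / x))))) ^ 2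
        ≤ ((1 + 1 / 403) / (1 - 1 / 403)) ^ 2 := by gcongr
      _ ≤ 1.01 := by norm_num
  calc nomeTheta (Real.exp (-(1.01 * π / x)))
      = nomeTheta (Real.exp (-(π / (1.01 / x)))) * √x / √1.01 := by
        rw [mul_comm, mul_div_assoc, nomeTheta_exp_neg_pi_mul (by positivity),
          Real.sqrt_div (by norm_num), div_div_eq_mul_div]
    _ ≤ √1.01 * √x / √1.01 := by gcongr
    _ = √x := mul_div_cancel_left₀ _ (by positivity)

lemma exp_pi_mul_le : Real.exp (1.01 * π) ≤ 24.48 := by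
  have exp_three_le : Real.exp 3 ≤ 2.7183 ^ 3 := by
    rw [show (3 : ℝ) = (3 : ℕ) * 1 by norm_num, Real.exp_nat_mul]
    gcongr
    exact Real.exp_one_lt_d9.le.trans (by norm_num)
  have exp_small_le : Real.exp 0.1731 ≤ 1 / (1 - 0.1731) :=
    Real.exp_bound_div_one_sub_of_interval (by norm_num) (by norm_num)
  calc Real.exp (1.01 * π) ≤ Real.exp (3 + 0.1731) :=
        Real.exp_le_exp.mpr (by linarith [Real.pi_lt_d4])
    _ = Real.exp 3 * Real.exp 0.1731 := Real.exp_add _ _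
    _ ≤ 2.7183 ^ 3 * (1 / (1 - 0.1731)) := by gcongr
    _ ≤ 24.48 := by norm_num

end NumericalBounds

/-- for real `u ≥ 0` and `m ≥ 1`, `|c_m(u)| ≤ 6u·m^{u/2+1}`. -/
theorem thetaCoeff_bound' (u : ℝ) (hu : 0 ≤ u) (m : ℕ) (hm : 1 ≤ m) :
    |Polynomial.aeval u (thetaCoeff m)| ≤ 6 * u * (m : ℝ) ^ (u / 2 + 1) := by
  obtain rfl | m_ge : m = 1 ∨ 2 ≤ m := by omega
  · rw [aeval_thetaCoeff_one, abs_of_nonneg (by positivity), Nat.cast_one, Real.one_rpow]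
    linarith
  have m_pos : (0 : ℝ) < m := by positivity
  have theta_le : nomeTheta (Real.exp (-(1.01 * π / m))) ≤ √m :=
    nomeTheta_exp_neg_pi_div_le_sqrt (by exact_mod_cast m_ge)
  calc |Polynomial.aeval u (thetaCoeff m)|
      ≤ u * (π ^ 2 / (4 * (1.01 * π / m) ^ 2)) * nomeTheta (Real.exp (-(1.01 * π / m))) ^ u *
          Real.exp (m * (1.01 * π / m)) / m :=
        abs_aeval_thetaCoeff_le hu (by omega) (by positivity)
    _ ≤ u * (π ^ 2 / (4 * (1.01 * π / m) ^ 2)) * √m ^ u * 24.48 / m := by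
        gcongr
        · exact tsum_nonneg fun _ ↦ by positivity
        · rw [mul_div_cancel₀ _ m_pos.ne']; exact exp_pi_mul_le
    _ = 24.48 / (4 * 1.01 ^ 2) * u * (m : ℝ) ^ (u / 2 + 1) := by
        rw [Real.rpow_add_one m_pos.ne', Real.sqrt_eq_rpow, ← Real.rpow_mul m_pos.le,
          one_div_mul_eq_div]
        field_simp
    _ ≤ 6 * u * (m : ℝ) ^ (u / 2 + 1) := by gcongr; norm_num
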